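/- Let L be the function L(η) = (2η)^{−2η} on the positive reals. Whenever x, y, η are positive reals with η ≤ 0.05, |x − y| ≤ η, and x ≤ 30, one has L(η)^{−1} ≤ y^y / x^x ≤ L(η). -/

import Mathlib

/-!
Since `t ^ t = exp (-negMulLog t)`, the claim is `|negMulLog x - negMulLog y| ≤ negMulLog (2 * η)`.
Let `a ≤ b` be `x` and `y` in increasing order. The tangent line at `b` of the concave function
`negMulLog` gives `negMulLog a - negMulLog b ≤ η * (1 + log b)`, which is at most
`-2 * η * log (2 * η)` as long as `b` is at most of order `η ^ (-2)`. In the other direction,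
subadditivity gives `negMulLog b - negMulLog a ≤ negMulLog (b - a)`, and `negMulLog` is increasing
near `0`.
-/

section PowersClose

open Real

theorem rpow_self_eq_exp_neg_negMulLog {x : ℝ} (hx : 0 ≤ x) : x ^ x = exp (-negMulLog x) := by
  rcases hx.eq_or_lt with rfl | hx
  · simp
  · rw [rpow_def_of_pos hx, negMulLog, neg_mul, neg_neg, mul_comm]

theorem negMulLog_sub_negMulLog_le {x y : ℝ} (hx : 0 ≤ x) (hy : 0 < y) :
    negMulLog x - negMulLog y ≤ (y - x) * (1 + log y) := by
  have hratio : negMulLog (x / y) ≤ 1 - x / y := negMulLog_le_one_sub_self (by positivity)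
  calc negMulLog x - negMulLog y
      = negMulLog (y * (x / y)) - negMulLog y := by rw [mul_div_cancel₀ x hy.ne']
    _ = x / y * negMulLog y + y * negMulLog (x / y) - negMulLog y := by rw [negMulLog_mul]
    _ ≤ x / y * negMulLog y + y * (1 - x / y) - negMulLog y := by gcongr
    _ = (y - x) * (1 + log y) := by
      rw [negMulLog]
      field_simp
      ring

theorem negMulLog_add_le {x y : ℝ} (hx : 0 ≤ x) (hy : 0 ≤ y) :
    negMulLog (x + y) ≤ negMulLog x + negMulLog y := by
  rcases hx.eq_or_lt with rfl | hx
  · simp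
  rcases hy.eq_or_lt with rfl | hy
  · simp
  have hlogx : x * log x ≤ x * log (x + y) := by gcongr; linarith
  have hlogy : y * log y ≤ y * log (x + y) := by gcongr; linarith
  simp only [negMulLog]
  linarith

theorem monotoneOn_negMulLog : MonotoneOn negMulLog (Set.Icc 0 (exp (-1))) := by
  simpa only [negMulLog_eq_neg] using! mul_log_strictAntiOn.antitoneOn.neg

theorem negMulLog_le_negMulLog_two_mul {t : ℝ} (ht : 0 ≤ t) (ht' : t ≤ 1 / 4) :
    negMulLog t ≤ negMulLog (2 * t) := by
  have hnonneg : 0 ≤ negMulLog (2 * (2 * t)) := negMulLog_nonneg (by positivity) (by linarith)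
  have hdouble (s : ℝ) : negMulLog (2 * s) = 2 * negMulLog s - 2 * s * log 2 := by
    rw [negMulLog_mul, negMulLog]
    ring
  linarith [hdouble t, hdouble (2 * t)]

theorem negMulLog_left_sub_right_le {a b η : ℝ} (ha : 0 ≤ a) (hab : a < b)
    (hη : η ≤ 1 / 2) (hd : b - a ≤ η) (hb : exp 1 * b * (2 * η) ^ 2 ≤ 1) :
    negMulLog a - negMulLog b ≤ negMulLog (2 * η) := by
  have hb_pos : 0 < b := ha.trans_lt hab
  have hη_pos : 0 < η := by linarith
  have hlog_nonpos : log (2 * η) ≤ 0 := log_nonpos (by positivity) (by linarith)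
  have hslope : 1 + log b ≤ -2 * log (2 * η) := by
    have hlog : log (exp 1 * b * (2 * η) ^ 2) = 1 + log b + 2 * log (2 * η) := by
      rw [log_mul (by positivity) (by positivity), log_mul (by positivity) (by positivity),
        log_exp, log_pow, Nat.cast_ofNat]
    linarith [log_nonpos (by positivity) hb]
  calc negMulLog a - negMulLog b
      ≤ (b - a) * (1 + log b) := negMulLog_sub_negMulLog_le ha hb_pos
    _ ≤ (b - a) * (-2 * log (2 * η)) := by gcongr
    _ ≤ η * (-2 * log (2 * η)) := mul_le_mul_of_nonneg_right hd (by linarith)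
    _ = negMulLog (2 * η) := by rw [negMulLog]; ring

theorem negMulLog_right_sub_left_le {a b η : ℝ} (ha : 0 ≤ a) (hab : a ≤ b)
    (hη : η ≤ 1 / 4) (hd : b - a ≤ η) :
    negMulLog b - negMulLog a ≤ negMulLog (2 * η) := by
  have hd_nonneg : 0 ≤ b - a := sub_nonneg.2 hab
  have hη_nonneg : 0 ≤ η := hd_nonneg.trans hd
  have hquarter : 1 / 4 ≤ exp (-1) := by
    rw [exp_neg, one_div]
    exact inv_anti₀ (exp_pos 1) (by linarith [exp_one_lt_three])
  have hη_exp : η ≤ exp (-1) := hη.trans hquarter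
  calc negMulLog b - negMulLog a
      = negMulLog (a + (b - a)) - negMulLog a := by rw [add_sub_cancel]
    _ ≤ negMulLog (b - a) := sub_le_iff_le_add'.2 (negMulLog_add_le ha hd_nonneg)
    _ ≤ negMulLog η := monotoneOn_negMulLog ⟨hd_nonneg, hd.trans hη_exp⟩ ⟨hη_nonneg, hη_exp⟩ hd
    _ ≤ negMulLog (2 * η) := negMulLog_le_negMulLog_two_mul hη_nonneg hη

theorem abs_negMulLog_sub_negMulLog_le {x y η : ℝ} (hx : 0 ≤ x) (hy : 0 ≤ y) (hη : η ≤ 1 / 4)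
    (hxy : |x - y| ≤ η) (hmax : exp 1 * max x y * (2 * η) ^ 2 ≤ 1) :
    |negMulLog x - negMulLog y| ≤ negMulLog (2 * η) := by
  wlog hle : x ≤ y generalizing x y
  · rw [abs_sub_comm]
    exact this hy hx (abs_sub_comm x y ▸ hxy) (max_comm x y ▸ hmax) (le_of_not_ge hle)
  have hη_nonneg : 0 ≤ η := (abs_nonneg _).trans hxy
  have hd : y - x ≤ η := by linarith [neg_abs_le (x - y)]
  rw [max_eq_right hle] at hmax
  rcases hle.eq_or_lt with rfl | hlt
  · simpa using negMulLog_nonneg (by positivity) (by linarith : 2 * η ≤ 1)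
  · exact abs_sub_le_iff.2
      ⟨negMulLog_left_sub_right_le hx hlt (by linarith) hd hmax,
        negMulLog_right_sub_left_le hx hle hη hd⟩

theorem exp_one_mul_mul_sq_le_one {b η : ℝ} (hb : b ≤ 100 / 3) (hη : 0 ≤ η) (hη' : η ≤ 1 / 20) :
    exp 1 * b * (2 * η) ^ 2 ≤ 1 := by
  calc exp 1 * b * (2 * η) ^ 2
      ≤ exp 1 * (100 / 3) * (2 * η) ^ 2 := by gcongr
    _ ≤ 3 * (100 / 3) * (2 * (1 / 20)) ^ 2 := by gcongr; exact exp_one_lt_three.le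
    _ = 1 := by norm_num

theorem powers_close_lemma_general {x y η : ℝ} (hx : 0 ≤ x) (hy : 0 ≤ y) (hη : η ≤ 1 / 4)
    (hxy : |x - y| ≤ η) (hmax : exp 1 * max x y * (2 * η) ^ 2 ≤ 1) :
    ((2 * η) ^ (-(2 * η)))⁻¹ ≤ y ^ y / x ^ x ∧ y ^ y / x ^ x ≤ (2 * η) ^ (-(2 * η)) := by
  have hη_nonneg : 0 ≤ 2 * η := by linarith [abs_nonneg (x - y)]
  rw [rpow_neg hη_nonneg, inv_inv, rpow_self_eq_exp_neg_negMulLog hx,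
    rpow_self_eq_exp_neg_negMulLog hy, rpow_self_eq_exp_neg_negMulLog hη_nonneg, ← exp_sub,
    ← exp_neg, exp_le_exp, exp_le_exp, neg_neg, neg_sub_neg]
  exact abs_le.1 (abs_negMulLog_sub_negMulLog_le hx hy hη hxy hmax)

end PowersClose

/-- with `L(η) = (2η)^{−2η}`, whenever `0 < η ≤ 0.05`, `|x − y| ≤ η`,
`x, y > 0` and `x ≤ 30`, one has `L(η)⁻¹ ≤ y^y / x^x ≤ L(η)`
(here `t^t = exp(t log t)` is the real power). -/
theorem powers_close_lemma (x y η : ℝ) (hx : 0 < x) (hy : 0 < y) (hη : 0 < η)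
    (hη' : η ≤ 0.05) (hxy : |x - y| ≤ η) (hx30 : x ≤ 30) :
    ((2 * η) ^ (-(2 * η)))⁻¹ ≤ y ^ y / x ^ x ∧
      y ^ y / x ^ x ≤ (2 * η) ^ (-(2 * η)) := by
  have hmax : max x y ≤ 100 / 3 := max_le (by linarith) (by linarith [neg_abs_le (x - y)])
  exact powers_close_lemma_general hx.le hy.le (by linarith) hxy
    (exp_one_mul_mul_sq_le_one hmax hη.le (by linarith))
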